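/- arXiv:1004.4020 — 2 statements merged into one kernel-verified Lean document; each statement's English description precedes it below -/
import Mathlib

section
/- Let g be a probability density function on the real numbers satisfying the symmetry condition g(-l) = e^{-l} g(l) for almost all l. Let X be uniformly distributed on {+1, -1} and let L be a real random variable whose conditional density given X = +1 is g(l) and whose conditional density given X = -1 is g(-l). Then the mutual information (in bits) between X and L equals I(X;L) = ∫_0^∞ g(l) [ e^{-l} log₂(2/(1+e^l)) + log₂(2/(1+e^{-l})) ] dl. In particular, I(X;L) is a linear functional of the density g. -/
open MeasureTheory Real

/-- The integrand of the mutual information (in bits) between a uniform binary input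
`X ∈ {+1,-1}` and a real output `L` whose conditional density given `X = +1` is `g(l)`
and given `X = -1` is `g(-l)`.  The marginal density of `L` is `(g(l) + g(-l))/2`. -/
noncomputable def mibIntegrand (g : ℝ → ℝ) (l : ℝ) : ℝ :=
  g l / 2 * Real.logb 2 (2 * g l / (g l + g (-l)))
    + g (-l) / 2 * Real.logb 2 (2 * g (-l) / (g l + g (-l)))

/-- Mutual information (in bits) `I(X;L)` of the binary-input symmetric channel with
conditional density `g(l) = p_{L|X}(l|+1)` and uniform input. -/
noncomputable def mutualInfoBits (g : ℝ → ℝ) : ℝ := ∫ l : ℝ, mibIntegrand g l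

/-- If the density `g` satisfies the L-value symmetry condition `g(-l) = e^{-l} g(l)`
for almost all `l`, then
`I(X;L) = ∫_0^∞ g(l) [ e^{-l} log₂(2/(1+e^l)) + log₂(2/(1+e^{-l})) ] dl`,
a linear functional of `g`. -/
theorem mutualInfo_eq_integral_of_symmetric (g : ℝ → ℝ)
    (hmeas : Measurable g) (hnonneg : ∀ l, 0 ≤ g l)
    (hpdf : ∫ l : ℝ, g l = 1)
    (hsym : ∀ᵐ l : ℝ ∂volume, g (-l) = Real.exp (-l) * g l)
    (hint : Integrable (mibIntegrand g)) :
    mutualInfoBits g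
      = ∫ l in Set.Ioi (0 : ℝ),
          g l * (Real.exp (-l) * Real.logb 2 (2 / (1 + Real.exp l))
                  + Real.logb 2 (2 / (1 + Real.exp (-l)))) := by
  have heven : ∀ l, mibIntegrand g (-l) = mibIntegrand g l := by
    intro l
    simp only [mibIntegrand, neg_neg]
    rw [add_comm (g (-l)) (g l), add_comm]
  have habs : ∀ l, mibIntegrand g |l| = mibIntegrand g l := by
    intro l
    rcases abs_choice l with h | h
    · rw [h]
    · rw [h, heven]
  have h1 : mutualInfoBits g = 2 * ∫ l in Set.Ioi (0 : ℝ), mibIntegrand g l := by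
    rw [← integral_comp_abs]
    simp only [habs]
    rfl
  rw [h1, ← integral_const_mul]
  apply integral_congr_ae
  filter_upwards [ae_restrict_of_ae hsym] with l hl
  simp only [mibIntegrand, hl]
  by_cases h0 : g l = 0
  · simp [h0]
  have hp : 0 < Real.exp l := Real.exp_pos l
  have e1 : 2 * g l / (g l + Real.exp (-l) * g l) = 2 / (1 + Real.exp (-l)) := by
    have : 0 < Real.exp (-l) := Real.exp_pos _
    field_simp
  have e2 : 2 * (Real.exp (-l) * g l) / (g l + Real.exp (-l) * g l)
      = 2 / (1 + Real.exp l) := by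
    rw [Real.exp_neg]
    field_simp
    ring
  rw [e1, e2]
  ring
end

section
/- (Mixing of EXIT functions.) Let {g_i} be a finite collection of probability density functions on ℝ, each satisfying the symmetry condition g_i(-l) = e^{-l} g_i(l) almost everywhere, and let λ_i ≥ 0 with Σ_i λ_i = 1. For each i, let X_i be uniform on {+1,-1} and L_i have conditional density g_i(l) given X_i = +1 and g_i(-l) given X_i = -1. Let X̄ be uniform on {+1,-1} and L̄ have conditional density ḡ(l) = Σ_i λ_i g_i(l) given X̄ = +1 and ḡ(-l) given X̄ = -1. Then Σ_i λ_i I(X_i; L_i) = I(X̄; L̄), i.e., the average of the mutual informations of the component channels equals the mutual information of the averaged channel. -/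
open MeasureTheory Real

/-- Under the symmetry condition at `l`, the integrand is linear in `g l`. -/
lemma mibIntegrand_of_sym (g : ℝ → ℝ) (l : ℝ) (h : g (-l) = Real.exp (-l) * g l) :
    mibIntegrand g l = g l * (1 / 2 * Real.logb 2 (2 / (1 + Real.exp (-l)))
      + Real.exp (-l) / 2 * Real.logb 2 (2 * Real.exp (-l) / (1 + Real.exp (-l)))) := by
  unfold mibIntegrand
  rw [h]
  have he := Real.exp_pos (-l)
  by_cases h0 : g l = 0
  · simp [h0]
  · have h1 : 1 + Real.exp (-l) ≠ 0 := by positivity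
    have hs : g l + Real.exp (-l) * g l = g l * (1 + Real.exp (-l)) := by ring
    have e1 : 2 * g l / (g l + Real.exp (-l) * g l) = 2 / (1 + Real.exp (-l)) := by
      rw [hs]; field_simp
    have e2 : 2 * (Real.exp (-l) * g l) / (g l + Real.exp (-l) * g l)
        = 2 * Real.exp (-l) / (1 + Real.exp (-l)) := by
      rw [hs]; field_simp
    rw [e1, e2]; ring

/-- Mixing of EXIT functions: for a finite collection of symmetric binary-input channels
with densities `gᵢ` and weights `λᵢ ≥ 0`, `Σᵢ λᵢ = 1`, the average of the mutual
informations equals the mutual information of the averaged channel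
`ḡ(l) = Σᵢ λᵢ gᵢ(l)`. -/
theorem mixing_of_exit_functions (n : ℕ) (g : Fin n → ℝ → ℝ) (lam : Fin n → ℝ)
    (hmeas : ∀ i, Measurable (g i)) (hnonneg : ∀ i l, 0 ≤ g i l)
    (hpdf : ∀ i, ∫ l : ℝ, g i l = 1)
    (hsym : ∀ i, ∀ᵐ l : ℝ ∂volume, g i (-l) = Real.exp (-l) * g i l)
    (hlam0 : ∀ i, 0 ≤ lam i) (hlam1 : ∑ i, lam i = 1)
    (hint : ∀ i, Integrable (mibIntegrand (g i)))
    (hintmix : Integrable (mibIntegrand (fun l => ∑ i, lam i * g i l))) :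
    ∑ i, lam i * mutualInfoBits (g i)
      = mutualInfoBits (fun l => ∑ i, lam i * g i l) := by
  unfold mutualInfoBits
  simp_rw [← integral_const_mul]
  rw [← integral_finsetSum _ (fun i _ => (hint i).const_mul (lam i))]
  apply integral_congr_ae
  filter_upwards [ae_all_iff.2 hsym] with l hl
  rw [mibIntegrand_of_sym (fun l => ∑ i, lam i * g i l) l, Finset.sum_mul]
  · refine Finset.sum_congr rfl fun i _ => ?_
    rw [mibIntegrand_of_sym (g i) l (hl i), mul_assoc]
  · simp only [Finset.mul_sum]
    refine Finset.sum_congr rfl fun i _ => ?_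
    rw [hl i]; ring
end
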